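/- A blur shift space Σ_Λ, with the subspace topology inherited from the full blur shift Σ, is separable if and only if B_1(Λ), the set of letters of A occurring in sequences of Λ, is countable. -/

import Mathlib

open Set Filter Topology

namespace BlurPaper

/-- The extended alphabet `Ā = A ⊕ V`, where each blurred set `H ∈ V` is regarded
as a new symbol `H̃`. -/
abbrev Symb (A : Type*) (V : Set (Set A)) := A ⊕ {H : Set A // H ∈ V}

/-- `V` is a family of blurred sets: every member is infinite and two distinct members
have finite intersection. -/
def IsBlurFamily {A : Type*} (V : Set (Set A)) : Prop :=
  (∀ H ∈ V, H.Infinite) ∧ ∀ G ∈ V, ∀ H ∈ V, G ≠ H → (G ∩ H).Finite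

/-- The full blur shift `Σ`: sequences over `Ā` such that a blur symbol is followed
by the same blur symbol. -/
def FullBlur (A : Type*) (V : Set (Set A)) : Set (ℕ → Symb A V) :=
  {x | ∀ (i : ℕ) (H : {H : Set A // H ∈ V}), x i = Sum.inr H → x (i + 1) = Sum.inr H}

/-- Generalized cylinder `Z(α)`. -/
def Z (A : Type*) (V : Set (Set A)) (α : List A) : Set (FullBlur A V) :=
  {x | ∀ i : Fin α.length, x.1 i = Sum.inl (α.get i)}

/-- Generalized cylinder `Z(α, H, F)`. -/
def ZH (A : Type*) (V : Set (Set A)) (α : List A) (H : {H : Set A // H ∈ V})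
    (F : Set A) : Set (FullBlur A V) :=
  {x | (∀ i : Fin α.length, x.1 i = Sum.inl (α.get i)) ∧
    (x.1 α.length = Sum.inr H ∨ ∃ a ∈ H.1 \ F, x.1 α.length = Sum.inl a)}

/-- The collection of all generalized cylinders. -/
def Cylinders (A : Type*) (V : Set (Set A)) : Set (Set (FullBlur A V)) :=
  {U | ∃ α : List A, U = Z A V α} ∪
  {U | ∃ (α : List A) (H : {H : Set A // H ∈ V}) (F : Set A),
    F ⊆ H.1 ∧ F.Finite ∧ U = ZH A V α H F}

/-- The topology on the full blur shift generated by the generalized cylinders. -/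
def tau (A : Type*) (V : Set (Set A)) : TopologicalSpace (FullBlur A V) :=
  TopologicalSpace.generateFrom (Cylinders A V)

/-- The shift map on the full blur shift. -/
def shift (A : Type*) (V : Set (Set A)) : FullBlur A V → FullBlur A V :=
  fun x => ⟨fun i => x.1 (i + 1), fun i H h => x.2 (i + 1) H h⟩

/-- The shift map on `A^ℕ`. -/
def shiftSeq (A : Type*) : (ℕ → A) → ℕ → A := fun x i => x (i + 1)

/-- The prodiscrete topology on `A^ℕ` (product of discrete topologies). -/
def prodDiscrete (A : Type*) : TopologicalSpace (ℕ → A) :=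
  @Pi.topologicalSpace ℕ (fun _ => A) fun _ => ⊥

/-- A (classical) shift space over `A`: closed in the prodiscrete topology and
invariant under the shift map. -/
def IsShiftSpace {A : Type*} (Λ : Set (ℕ → A)) : Prop :=
  @IsClosed _ (prodDiscrete A) Λ ∧ ∀ x ∈ Λ, shiftSeq A x ∈ Λ

/-- `w ∈ B(Y)`: the finite word `w` appears as an initial word of some element of `Y`. -/
def InLang {A : Type*} (Y : Set (ℕ → A)) (w : List A) : Prop :=
  ∃ x ∈ Y, ∀ i : Fin w.length, x i = w.get i

/-- The follower set `F_Y(w) = {a : w a ∈ B(Y)}`. -/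
def Fol {A : Type*} (Y : Set (ℕ → A)) (w : List A) : Set A :=
  {a | InLang Y (w ++ [a])}

/-- The predecessor set `P_Y(a) = {b : b a ∈ B(Y)}`. -/
def Pred {A : Type*} (Y : Set (ℕ → A)) (a : A) : Set A :=
  {b | InLang Y [b, a]}

/-- `B₁(Y)`: the set of letters occurring in sequences of `Y`. -/
def letters {A : Type*} (Y : Set (ℕ → A)) : Set A :=
  {a | ∃ x ∈ Y, ∃ i, x i = a}

/-- The canonical embedding `A^ℕ → Σ`. -/
def embed (A : Type*) (V : Set (Set A)) : (ℕ → A) → FullBlur A V :=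
  fun x => ⟨fun i => Sum.inl (x i), fun _ _ h => absurd h (by simp)⟩

/-- The point `(a₀ … a_{n-1} H̃ H̃ H̃ …)` of the full blur shift. -/
def wordBlur {A : Type*} {V : Set (Set A)} (α : List A) (H : {H : Set A // H ∈ V}) :
    FullBlur A V :=
  ⟨fun i => if h : i < α.length then Sum.inl (α.get ⟨i, h⟩) else Sum.inr H, by
    intro i K hK
    by_cases h : i < α.length
    · simp only [dif_pos h] at hK
      exact absurd hK (by simp)
    · simp only [dif_neg h] at hK
      simp only [dif_neg (by omega : ¬ i + 1 < α.length)]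
      exact hK⟩

/-- The boundary `∂Y`: points `(a₀ … a_{n-1} H̃ H̃ …)` with `a₀ … a_{n-1} ∈ B(Y)` and
`F_Y(a₀ … a_{n-1}) ∩ H` infinite. -/
def boundary (A : Type*) (V : Set (Set A)) (Y : Set (ℕ → A)) : Set (FullBlur A V) :=
  {z | ∃ (α : List A) (H : {H : Set A // H ∈ V}),
    z = wordBlur α H ∧ InLang Y α ∧ (Fol Y α ∩ H.1).Infinite}

/-- The blur shift space `Σ_Y = Y ∪ ∂Y` of `Y` with resolution `V`. -/
def SigmaOf (A : Type*) (V : Set (Set A)) (Y : Set (ℕ → A)) : Set (FullBlur A V) :=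
  embed A V '' Y ∪ boundary A V Y

/-- The subspace topology inherited from the full blur shift. -/
def subTau (A : Type*) (V : Set (Set A)) (X : Set (FullBlur A V)) :
    TopologicalSpace X :=
  TopologicalSpace.induced Subtype.val (tau A V)

/-- `V_Λ`: the blurred sets that appear in `Σ_Λ`, i.e. those meeting `B₁(Λ)` in an
infinite set. -/
def VLam (A : Type*) (V : Set (Set A)) (Λ : Set (ℕ → A)) : Set (Set A) :=
  {H | H ∈ V ∧ (letters Λ ∩ H).Infinite}

/-!
A blur symbol persists once it occurs, so a point `x` with `x i = a ∈ A` begins with a word of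
length `i + 1` over `A`. Hence, for each `i`, the sets `{x | x i = a}` with `a ∈ A` are open and
pairwise disjoint, and only countably many of them meet a separable subspace of `Σ`.

Conversely, the cylinders `Z(α, H, F)` form a neighbourhood basis at `α H̃ H̃ …`. When infinitely
many letters of `H` follow `α` in `Λ`, each of these cylinders meets `Λ`, so `Λ` is dense in `Σ_Λ`.
The embedding of `A^ℕ` in `Σ` is continuous, and if `B₁(Λ)` is countable then `Λ` lies in the
separable metrizable space `B₁(Λ)^ℕ`, so `Λ` is separable and with it `Σ_Λ`.
-/

section Cylinders

variable {A : Type*} {V : Set (Set A)} {α β : List A} {H : {H : Set A // H ∈ V}}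
  {x y : FullBlur A V}

theorem apply_eq_of_mem_Z (hx : x ∈ Z A V α) (hy : y ∈ Z A V α) {i : ℕ} (hi : i < α.length) :
    x.1 i = y.1 i :=
  (hx ⟨i, hi⟩).trans (hy ⟨i, hi⟩).symm

theorem ZH_subset_Z (α : List A) (H : {H : Set A // H ∈ V}) (F : Set A) :
    ZH A V α H F ⊆ Z A V α :=
  fun _ hx => hx.1

theorem ZH_antitone (α : List A) (H : {H : Set A // H ∈ V}) : Antitone (ZH A V α H) :=
  fun _ _ hFG _ hx => ⟨hx.1, hx.2.imp_right fun ⟨a, ha, hxa⟩ => ⟨a, ⟨ha.1, mt (@hFG a) ha.2⟩, hxa⟩⟩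

theorem exists_eq_inl_of_le {i j : ℕ} (hij : i ≤ j) (hj : ∃ a, x.1 j = Sum.inl a) :
    ∃ a, x.1 i = Sum.inl a := by
  induction hij using Nat.decreasingInduction with
  | self => exact hj
  | of_succ i _ ih =>
    obtain ⟨a, ha⟩ := ih
    rcases hi : x.1 i with b | K
    · exact ⟨b, rfl⟩
    · exact absurd ((x.2 i K hi).symm.trans ha) Sum.inr_ne_inl

theorem exists_length_eq_mem_Z {n : ℕ} (h : ∀ i < n, ∃ a, x.1 i = Sum.inl a) :
    ∃ α : List A, α.length = n ∧ x ∈ Z A V α := by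
  choose a ha using fun i : Fin n => h i i.2
  refine ⟨List.ofFn a, List.length_ofFn, fun i => ?_⟩
  rw [List.get_ofFn]
  exact ha (i.cast List.length_ofFn)

theorem wordBlur_apply_length (α : List A) (H : {H : Set A // H ∈ V}) :
    (wordBlur α H).1 α.length = Sum.inr H :=
  dif_neg (lt_irrefl _)

theorem wordBlur_mem_Z (α : List A) (H : {H : Set A // H ∈ V}) : wordBlur α H ∈ Z A V α :=
  fun i => dif_pos i.2

theorem wordBlur_mem_ZH (α : List A) (H : {H : Set A // H ∈ V}) (F : Set A) :
    wordBlur α H ∈ ZH A V α H F :=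
  ⟨wordBlur_mem_Z α H, Or.inl (wordBlur_apply_length α H)⟩

theorem length_le_of_wordBlur_mem_Z (h : wordBlur α H ∈ Z A V β) : β.length ≤ α.length := by
  by_contra! hlt
  exact Sum.inr_ne_inl ((wordBlur_apply_length α H).symm.trans (h ⟨α.length, hlt⟩))

theorem Z_subset_Z_of_wordBlur_mem_Z (h : wordBlur α H ∈ Z A V β) : Z A V α ⊆ Z A V β :=
  fun _ hx i =>
    (apply_eq_of_mem_Z hx (wordBlur_mem_Z α H)
      (i.2.trans_le (length_le_of_wordBlur_mem_Z h))).trans (h i)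

theorem exists_ZH_subset_of_wordBlur_mem_ZH {G : {H : Set A // H ∈ V}} {F : Set A}
    (hFG : F ⊆ G.1) (hF : F.Finite) (h : wordBlur α H ∈ ZH A V β G F) :
    ∃ E ⊆ H.1, E.Finite ∧ ZH A V α H E ⊆ ZH A V β G F := by
  have hZ : Z A V α ⊆ Z A V β := Z_subset_Z_of_wordBlur_mem_Z h.1
  rcases (length_le_of_wordBlur_mem_Z h.1).lt_or_eq with hlt | heq
  · refine ⟨∅, empty_subset _, finite_empty, fun x hx => ⟨hZ hx.1, ?_⟩⟩
    rw [apply_eq_of_mem_Z hx.1 (wordBlur_mem_Z α H) hlt]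
    exact h.2
  · have hsymb := h.2
    rw [heq, wordBlur_apply_length] at hsymb
    obtain rfl : H = G := by simpa using hsymb
    exact ⟨F, hFG, hF, fun x hx => ⟨hZ hx.1, heq ▸ hx.2⟩⟩

theorem exists_ZH_subset_of_mem_Cylinders {s : Set (FullBlur A V)} (hs : s ∈ Cylinders A V)
    (h : wordBlur α H ∈ s) : ∃ E ⊆ H.1, E.Finite ∧ ZH A V α H E ⊆ s := by
  obtain ⟨β, rfl⟩ | ⟨β, G, F, hFG, hF, rfl⟩ := hs
  · exact ⟨∅, empty_subset _, finite_empty,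
      (ZH_subset_Z α H ∅).trans (Z_subset_Z_of_wordBlur_mem_Z h)⟩
  · exact exists_ZH_subset_of_wordBlur_mem_ZH hFG hF h

/-- The letters of the alphabet `A` occurring in points of `X ⊆ Σ`: the analogue of `B₁` for sets
of sequences over `Ā`, in which the blur symbols are not counted. -/
def lettersOf (X : Set (FullBlur A V)) : Set A :=
  {a | ∃ x ∈ X, ∃ i, x.1 i = Sum.inl a}

theorem letters_subset_lettersOf_SigmaOf (V : Set (Set A)) (Y : Set (ℕ → A)) :
    letters Y ⊆ lettersOf (SigmaOf A V Y) := by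
  rintro _ ⟨x, hx, i, rfl⟩
  exact ⟨embed A V x, Or.inl ⟨x, hx, rfl⟩, i, rfl⟩

theorem embed_mem_Z {x : ℕ → A} :
    embed A V x ∈ Z A V α ↔ ∀ i : Fin α.length, x i = α.get i :=
  forall_congr' fun _ => Sum.inl_injective.eq_iff

theorem embed_mem_ZH {x : ℕ → A} {F : Set A} :
    embed A V x ∈ ZH A V α H F ↔
      (∀ i : Fin α.length, x i = α.get i) ∧ x α.length ∈ H.1 \ F := by
  refine and_congr embed_mem_Z ?_
  simp [embed]

theorem mem_Fol {Y : Set (ℕ → A)} {a : A} :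
    a ∈ Fol Y α ↔ ∃ x ∈ Y, (∀ i : Fin α.length, x i = α.get i) ∧ x α.length = a := by
  refine exists_congr fun x => and_congr_right fun _ => ⟨fun h => ⟨fun i => ?_, ?_⟩, fun h i => ?_⟩
  · simpa using h ⟨i, by simp⟩
  · simpa using h ⟨α.length, by simp⟩
  · obtain ⟨i, hi⟩ := i
    rcases Nat.lt_succ_iff_lt_or_eq.1 (by simpa using hi : i < α.length + 1) with hlt | rfl
    · simpa [hlt] using h.1 ⟨i, hlt⟩
    · simpa using h.2

end Cylinders

section Topology

variable {A : Type*} {V : Set (Set A)}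

attribute [local instance] tau

theorem isOpen_Z (α : List A) : IsOpen (Z A V α) :=
  TopologicalSpace.isOpen_generateFrom_of_mem (Or.inl ⟨α, rfl⟩)

theorem isOpen_ZH (α : List A) (H : {H : Set A // H ∈ V}) {F : Set A} (hFH : F ⊆ H.1)
    (hF : F.Finite) : IsOpen (ZH A V α H F) :=
  TopologicalSpace.isOpen_generateFrom_of_mem (Or.inr ⟨α, H, F, hFH, hF, rfl⟩)

theorem hasBasis_nhds_wordBlur (α : List A) (H : {H : Set A // H ∈ V}) :
    (𝓝 (wordBlur α H)).HasBasis (fun F : Set A => F ⊆ H.1 ∧ F.Finite) (ZH A V α H) := by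
  have hnhds : 𝓝 (wordBlur α H) = ⨅ F ∈ {F : Set A | F ⊆ H.1 ∧ F.Finite}, 𝓟 (ZH A V α H F) := by
    refine le_antisymm (le_iInf₂ fun F hF => ?_) ?_
    · exact le_principal_iff.2 ((isOpen_ZH α H hF.1 hF.2).mem_nhds (wordBlur_mem_ZH α H F))
    · rw [tau, TopologicalSpace.nhds_generateFrom]
      refine le_iInf₂ fun s hs => ?_
      obtain ⟨E, hEH, hE, hEs⟩ := exists_ZH_subset_of_mem_Cylinders hs.2 hs.1
      exact iInf₂_le_of_le E ⟨hEH, hE⟩ (principal_mono.2 hEs)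
  rw [hnhds]
  refine hasBasis_biInf_principal (fun E hE F hF => ?_) ⟨∅, empty_subset _, finite_empty⟩
  exact ⟨E ∪ F, ⟨union_subset hE.1 hF.1, hE.2.union hF.2⟩,
    ZH_antitone α H subset_union_left, ZH_antitone α H subset_union_right⟩

theorem isOpen_setOf_apply_eq_inl (i : ℕ) (a : A) :
    IsOpen {x : FullBlur A V | x.1 i = Sum.inl a} := by
  refine isOpen_iff_forall_mem_open.2 fun x hx => ?_
  obtain ⟨α, hlength, hxα⟩ : ∃ α : List A, α.length = i + 1 ∧ x ∈ Z A V α :=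
    exists_length_eq_mem_Z fun j hj => exists_eq_inl_of_le (Nat.le_of_lt_succ hj) ⟨a, hx⟩
  exact ⟨Z A V α, fun y hy => (apply_eq_of_mem_Z hy hxα (by omega)).trans hx, isOpen_Z α, hxα⟩

theorem countable_lettersOf (X : Set (FullBlur A V)) [TopologicalSpace.SeparableSpace X] :
    (lettersOf X).Countable := by
  have hcoord (i : ℕ) : {a : A | ∃ x ∈ X, x.1 i = Sum.inl a}.Countable := by
    refine PairwiseDisjoint.countable_of_isOpen (s := fun a => {x : X | x.1.1 i = Sum.inl a})
      (fun a _ b _ hab => ?_) (fun a _ => ?_) (fun a ⟨x, hx, hxa⟩ => ⟨⟨x, hx⟩, hxa⟩)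
    · exact disjoint_left.2 fun x hxa hxb => hab (Sum.inl_injective (hxa.symm.trans hxb))
    · exact (isOpen_setOf_apply_eq_inl i a).preimage continuous_subtype_val
  refine (countable_iUnion hcoord).mono ?_
  rintro a ⟨x, hx, i, hxi⟩
  exact mem_iUnion.2 ⟨i, x, hx, hxi⟩

theorem continuous_embed [TopologicalSpace A] [DiscreteTopology A] : Continuous (embed A V) := by
  have hcyl (α : List A) : IsOpen {x : ℕ → A | ∀ i : Fin α.length, x i = α.get i} := by
    simp only [ofPred_forall]
    exact isOpen_iInter_of_finite fun i =>
      (isOpen_discrete {α.get i}).preimage (continuous_apply (A := fun _ : ℕ => A) (i : ℕ))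
  refine continuous_generateFrom_iff.2 ?_
  rintro _ (⟨α, rfl⟩ | ⟨α, H, F, -, -, rfl⟩)
  · simpa only [preimage, embed_mem_Z] using hcyl α
  · simp only [preimage, embed_mem_ZH]
    exact (hcyl α).inter ((isOpen_discrete (H.1 \ F)).preimage (continuous_apply α.length))

theorem boundary_subset_closure_image_embed (Y : Set (ℕ → A)) :
    boundary A V Y ⊆ closure (embed A V '' Y) := by
  rintro _ ⟨α, H, rfl, -, hinf⟩
  refine (mem_closure_iff_nhds_basis (hasBasis_nhds_wordBlur α H)).2 fun F ⟨_, hF⟩ => ?_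
  obtain ⟨a, ⟨haY, haH⟩, haF⟩ := (hinf.sdiff hF).nonempty
  obtain ⟨x, hxY, hxα, rfl⟩ := mem_Fol.1 haY
  exact ⟨embed A V x, mem_image_of_mem _ hxY, embed_mem_ZH.2 ⟨hxα, haH, haF⟩⟩

theorem SigmaOf_subset_closure_image_embed (Y : Set (ℕ → A)) :
    SigmaOf A V Y ⊆ closure (embed A V '' Y) :=
  union_subset subset_closure (boundary_subset_closure_image_embed Y)

theorem separableSpace_of_countable_letters [TopologicalSpace A]
    [TopologicalSpace.PseudoMetrizableSpace A] {Y : Set (ℕ → A)} (hY : (letters Y).Countable) :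
    TopologicalSpace.SeparableSpace Y := by
  let := TopologicalSpace.pseudoMetrizableSpaceUniformity A
  have := TopologicalSpace.pseudoMetrizableSpaceUniformity_countably_generated A
  exact ((TopologicalSpace.IsSeparable.univ_pi fun _ : ℕ => hY.isSeparable).mono
    fun x hx i _ => ⟨x, hx, i, rfl⟩).separableSpace

theorem separableSpace_SigmaOf [TopologicalSpace A] [DiscreteTopology A] (Y : Set (ℕ → A))
    [TopologicalSpace.SeparableSpace Y] : TopologicalSpace.SeparableSpace (SigmaOf A V Y) := by
  have hmaps : MapsTo (embed A V) Y (SigmaOf A V Y) := fun x hx => Or.inl ⟨x, hx, rfl⟩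
  have hdense : DenseRange hmaps.restrict := by
    refine Subtype.dense_iff.2 ?_
    rw [hmaps.range_restrict, Subtype.image_preimage_coe,
      inter_eq_self_of_subset_right hmaps.image_subset]
    exact SigmaOf_subset_closure_image_embed Y
  exact hdense.separableSpace (continuous_embed.restrict hmaps)

end Topology

theorem separable_iff_letters_countable_general {A : Type*} (V : Set (Set A)) (Λ : Set (ℕ → A)) :
    @TopologicalSpace.SeparableSpace (SigmaOf A V Λ) (subTau A V (SigmaOf A V Λ)) ↔
      (letters Λ).Countable := by
  let : TopologicalSpace (FullBlur A V) := tau A V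
  change TopologicalSpace.SeparableSpace (SigmaOf A V Λ) ↔ _
  constructor
  · intro _
    exact (countable_lettersOf (SigmaOf A V Λ)).mono (letters_subset_lettersOf_SigmaOf V Λ)
  · intro hΛ
    let : TopologicalSpace A := ⊥
    have : DiscreteTopology A := ⟨rfl⟩
    have : TopologicalSpace.SeparableSpace Λ := separableSpace_of_countable_letters hΛ
    exact separableSpace_SigmaOf Λ

/-- A blur shift space `Σ_Λ`, with the subspace topology, is
separable if and only if `B₁(Λ)` is countable. -/
theorem separable_iff_letters_countable {A : Type*} (V : Set (Set A))
    (hV : IsBlurFamily V) (Λ : Set (ℕ → A)) (hΛ : IsShiftSpace Λ) :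
    @TopologicalSpace.SeparableSpace (SigmaOf A V Λ) (subTau A V (SigmaOf A V Λ)) ↔
      (letters Λ).Countable :=
  separable_iff_letters_countable_general V Λ

end BlurPaper
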